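/- For μ sufficiently small one has R_β − μ^β̃ ≤ C μ^{2β̃}/(μ^β̃ − μa) for a constant C depending only on a; in particular R_β ≤ C' μ^β̃ for a constant C' depending only on a. -/

import Mathlib

open Set

/-- The radial scattering data: the rescaled interaction `w_μ(r) = μ⁻² w(r/μ)` (given through its
radial profile `w`), its zero-energy scattering solution `j̃` in radial form, and for each `κ ≥ 1`
the function `f̃_κ` which equals `κ j̃` on `[0, μ^β̃]` and solves
`f̃_κ'' = -½ a μ^(1-3β̃) f̃_κ` beyond `μ^β̃`. -/
structure ScatteringODE where
  a : ℝ
  beta : ℝ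
  mu : ℝ
  w : ℝ → ℝ
  jt : ℝ → ℝ
  jt' : ℝ → ℝ
  ft : ℝ → ℝ → ℝ
  ft' : ℝ → ℝ → ℝ
  ha : 0 < a
  hbeta : beta ∈ Set.Ioo (1/3 : ℝ) 1
  hmu : mu ∈ Set.Ioo (0 : ℝ) 1
  hw_nonneg : ∀ r, 0 ≤ w r
  hw_bdd : ∃ M, ∀ r, w r ≤ M
  hw_supp : ∀ r, 1 < r → w r = 0
  hjt_deriv : ∀ r, HasDerivAt jt (jt' r) r
  hjt_zero : jt 0 = 0
  hjt_ode : ∀ r ∈ Set.Ioo 0 mu, HasDerivAt jt' ((1/2) * (mu⁻¹ ^ 2 * w (r / mu)) * jt r) r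
  hjt_lin : ∀ r, mu ≤ r → jt r = r - mu * a
  hjt_nonneg : ∀ r, 0 ≤ r → 0 ≤ jt r
  hjt_mono : MonotoneOn jt (Set.Ici 0)
  hjt_le : ∀ r, 0 ≤ r → jt r ≤ r
  hft_deriv : ∀ κ r : ℝ, HasDerivAt (ft κ) (ft' κ r) r
  hft_eq : ∀ κ : ℝ, ∀ r ∈ Set.Icc (0:ℝ) (mu ^ beta), ft κ r = κ * jt r
  hft_ode : ∀ κ r : ℝ, mu ^ beta < r →
      HasDerivAt (ft' κ) (-(1/2) * a * mu ^ (1 - 3 * beta) * ft κ r) r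

/-- A scattering setup together with the tangency parameter `κ_β ∈ (1, μ^β̃/(μ^β̃ - μa))` and the
minimal tangency radius `R_β ∈ (μ^β̃, ∞)` at which `f̃_{κ_β}` is tangent to the line `r ↦ r`. -/
structure TangentScattering extends ScatteringODE where
  hsmall : mu * a < mu ^ beta
  kappa : ℝ
  Rb : ℝ
  hkappa : kappa ∈ Set.Ioo 1 (mu ^ beta / (mu ^ beta - mu * a))
  hRb : mu ^ beta < Rb
  htan_val : ft kappa Rb = Rb
  htan_der : ft' kappa Rb = 1
  hRb_min : ∀ R : ℝ, mu ^ beta < R → ft kappa R = R → ft' kappa R = 1 → Rb ≤ R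

/-- The radial form `f̃` of the scattering solution `f_β`, extended by `f̃(r) = r` for `r ≥ R_β`. -/
noncomputable def TangentScattering.fext (S : TangentScattering) (r : ℝ) : ℝ :=
  if r < S.Rb then S.ft S.kappa r else r

/-!
Write `b = μ ^ β̃` and `d = b - μ a`. Beyond `b` the function `f̃` is a harmonic oscillator with
squared frequency `q = a μ / (2 b³)`, so its energy `f̃'² + q f̃²` is conserved. It equals
`κ² (1 + q d²)` at `b` and `1 + q R²` at the tangency radius `R`; together with `κ d ≤ b` this gives
`(R² - b²) d² ≤ 4 b⁴`, hence `R ≤ b + 2 b² / d`. Since `j̃` is non-negative and monotone, `a < 1`,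
so that `d ≥ (1 - a) b` uniformly in `μ` and `β̃`.
-/

open Filter Topology

section Calculus

theorem hasDerivAt_unique_of_eqOn {𝕜 F : Type*} [NontriviallyNormedField 𝕜]
    [NormedAddCommGroup F] [NormedSpace 𝕜 F] {f g : 𝕜 → F} {f' g' : F} {s : Set 𝕜} {x : 𝕜}
    (hs : UniqueDiffWithinAt 𝕜 s x) (hx : x ∈ s) (hf : HasDerivAt f f' x)
    (hg : HasDerivAt g g' x) (h : EqOn f g s) : f' = g' :=
  hs.eq_deriv s hf.hasDerivWithinAt (hg.hasDerivWithinAt.congr h (h hx))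

variable {f f' : ℝ → ℝ} {b : ℝ}

-- A derivative need not be right-continuous, but by the mean value theorem it cannot jump.
theorem mapClusterPt_nhdsGT_of_hasDerivAt (hb : HasDerivWithinAt f (f' b) (Ici b) b)
    (hf : ∀ x > b, HasDerivAt f (f' x) x) : MapClusterPt (f' b) (𝓝[>] b) f' := by
  have hcont : ContinuousOn f (Ici b) := fun x hx => by
    rcases eq_or_lt_of_le (mem_Ici.1 hx) with rfl | hx
    exacts [hb.continuousWithinAt, (hf x hx).continuousAt.continuousWithinAt]
  have hmean : ∀ r ∈ Ioi b, ∃ ξ ∈ Ioo b r, f' ξ = slope f b r := fun r hr => by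
    simpa only [slope_def_field] using exists_hasDerivAt_eq_slope f f' hr
      (hcont.mono Icc_subset_Ici_self) fun x hx => hf x hx.1
  choose! ξ hξ hslope using hmean
  have hξb : Tendsto ξ (𝓝[>] b) (𝓝[>] b) := by
    refine tendsto_nhdsWithin_iff.2 ⟨?_, eventually_mem_nhdsWithin.mono fun r hr => (hξ r hr).1⟩
    exact tendsto_of_tendsto_of_tendsto_of_le_of_le' tendsto_const_nhds
      (tendsto_nhdsWithin_of_tendsto_nhds tendsto_id)
      (eventually_mem_nhdsWithin.mono fun r hr => (hξ r hr).1.le)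
      (eventually_mem_nhdsWithin.mono fun r hr => (hξ r hr).2.le)
  have hf'ξ : Tendsto (f' ∘ ξ) (𝓝[>] b) (𝓝 (f' b)) :=
    ((hasDerivWithinAt_iff_tendsto_slope' self_notMem_Ioi).1 (hb.mono Ioi_subset_Ici_self)).congr'
      (eventually_mem_nhdsWithin.mono fun r hr => (hslope r hr).symm)
  exact hf'ξ.mapClusterPt.of_comp hξb

theorem energy_eq_of_hasDerivAt {V V' : ℝ → ℝ} {r : ℝ} (hV : ∀ y, HasDerivAt V (V' y) y)
    (hb : HasDerivWithinAt f (f' b) (Ici b) b) (hf : ∀ x > b, HasDerivAt f (f' x) x)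
    (hf' : ∀ x > b, HasDerivAt f' (-V' (f x)) x) (hr : b ≤ r) :
    f' r ^ 2 / 2 + V (f r) = f' b ^ 2 / 2 + V (f b) := by
  rcases hr.eq_or_lt with rfl | hr
  · rfl
  have hderiv : ∀ x ∈ Ioi b, HasDerivAt (fun x => f' x ^ 2 / 2 + V (f x)) 0 x := fun x hx =>
    ((((hf' x hx).pow 2).div_const 2).add ((hV (f x)).comp x (hf x hx))).congr_deriv (by
      push_cast
      ring)
  have hconst : ∀ x ∈ Ioi b, f' x ^ 2 / 2 + V (f x) = f' r ^ 2 / 2 + V (f r) := fun x hx =>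
    isOpen_Ioi.is_const_of_deriv_eq_zero isPreconnected_Ioi
      (fun y hy => (hderiv y hy).differentiableAt.differentiableWithinAt)
      (fun y hy => (hderiv y hy).deriv) hx hr
  obtain ⟨U, hU, hf'U⟩ :=
    mapClusterPt_iff_ultrafilter.1 (mapClusterPt_nhdsGT_of_hasDerivAt hb hf)
  have hVU : Tendsto (V ∘ f) U (𝓝 (V (f b))) :=
    (hV (f b)).continuousAt.tendsto.comp
      ((hb.continuousWithinAt.mono Ioi_subset_Ici_self).tendsto.mono_left hU)
  have henergy : Tendsto (fun x => f' x ^ 2 / 2 + V (f x)) U (𝓝 (f' b ^ 2 / 2 + V (f b))) :=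
    ((hf'U.pow 2).div_const 2).add hVU
  refine tendsto_nhds_unique (tendsto_const_nhds.congr' ?_) henergy
  exact hU (eventually_mem_nhdsWithin.mono fun x hx => (hconst x hx).symm)

end Calculus

theorem le_add_of_oscillator_energy_eq {b d q κ R : ℝ} (hq : 0 < q) (hb : 0 < b) (hd : 0 < d)
    (hbd : d = b - 2 * q * b ^ 3) (hκ : |κ| ≤ b / d)
    (henergy : 1 + q * R ^ 2 = κ ^ 2 * (1 + q * d ^ 2)) : R ≤ b + 2 * b ^ 2 / d := by
  have hκd : κ ^ 2 * d ^ 2 ≤ b ^ 2 := by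
    rw [← mul_pow, sq_le_sq, abs_mul, abs_of_pos hd, abs_of_pos hb]
    exact (le_div_iff₀ hd).1 hκ
  have hdb : d ≤ b := by
    have : 0 < 2 * q * b ^ 3 := by positivity
    linarith
  have hsq : q * ((R ^ 2 - b ^ 2) * d ^ 2) ≤ q * (4 * b ^ 4) := calc
    q * ((R ^ 2 - b ^ 2) * d ^ 2) = (κ ^ 2 - 1) * d ^ 2 + q * d ^ 2 * (κ ^ 2 * d ^ 2 - b ^ 2) := by
      linear_combination d ^ 2 * henergy
    _ ≤ (b ^ 2 - d ^ 2) + 0 := by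
      refine add_le_add (by linarith) (mul_nonpos_of_nonneg_of_nonpos (by positivity) ?_)
      linarith
    _ = 2 * q * b ^ 3 * (b + d) := by linear_combination -(b + d) * hbd
    _ ≤ 2 * q * b ^ 3 * (b + b) := by gcongr
    _ = q * (4 * b ^ 4) := by ring
  have hR : R ^ 2 ≤ b ^ 2 + 4 * b ^ 4 / d ^ 2 :=
    sub_le_iff_le_add'.1 ((le_div_iff₀ (by positivity)).2 (le_of_mul_le_mul_left hsq hq))
  refine le_of_sq_le_sq (hR.trans ?_) (by positivity)
  have hcross : 0 ≤ 4 * b ^ 3 / d := by positivity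
  linear_combination hcross

namespace ScatteringODE

variable (S : ScatteringODE)

theorem jt'_mu : S.jt' S.mu = 1 :=
  hasDerivAt_unique_of_eqOn (uniqueDiffWithinAt_Ici S.mu) self_mem_Ici (S.hjt_deriv S.mu)
    ((hasDerivAt_id S.mu).sub_const (S.mu * S.a)) S.hjt_lin

theorem a_lt_one : S.a < 1 := by
  obtain ⟨hmu, -⟩ := S.hmu
  by_contra! ha
  have hjt_mu : S.jt S.mu ≤ 0 := by
    rw [S.hjt_lin S.mu le_rfl]
    nlinarith
  have hjt_zero : EqOn S.jt (fun _ => 0) (Icc 0 S.mu) := fun r hr =>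
    le_antisymm ((S.hjt_mono hr.1 hmu.le hr.2).trans hjt_mu) (S.hjt_nonneg r hr.1)
  have hjt'_mu : S.jt' S.mu = 0 :=
    hasDerivAt_unique_of_eqOn (uniqueDiffOn_Icc hmu _ (right_mem_Icc.2 hmu.le))
      (right_mem_Icc.2 hmu.le) (S.hjt_deriv S.mu) (hasDerivAt_const _ _) hjt_zero
  exact one_ne_zero (S.jt'_mu.symm.trans hjt'_mu)

theorem rpow_beta_pos : 0 < S.mu ^ S.beta :=
  Real.rpow_pos_of_pos S.hmu.1 _

theorem mu_lt_rpow_beta : S.mu < S.mu ^ S.beta := by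
  simpa only [Real.rpow_one] using Real.rpow_lt_rpow_of_exponent_gt S.hmu.1 S.hmu.2 S.hbeta.2

theorem one_sub_a_mul_rpow_beta_le :
    (1 - S.a) * S.mu ^ S.beta ≤ S.mu ^ S.beta - S.mu * S.a := by
  have hmul : S.mu * S.a ≤ S.mu ^ S.beta * S.a :=
    mul_le_mul_of_nonneg_right S.mu_lt_rpow_beta.le S.ha.le
  linarith

theorem rpow_beta_sub_pos : 0 < S.mu ^ S.beta - S.mu * S.a :=
  (mul_pos (sub_pos.2 S.a_lt_one) S.rpow_beta_pos).trans_le S.one_sub_a_mul_rpow_beta_le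

theorem rpow_two_mul_beta : S.mu ^ (2 * S.beta) = (S.mu ^ S.beta) ^ 2 := by
  rw [mul_comm]
  exact_mod_cast Real.rpow_mul_natCast S.hmu.1.le S.beta 2

theorem rpow_one_sub_mul_rpow_beta_pow : S.mu ^ (1 - 3 * S.beta) * (S.mu ^ S.beta) ^ 3 = S.mu := by
  rw [← Real.rpow_mul_natCast S.hmu.1.le, ← Real.rpow_add S.hmu.1]
  norm_num [mul_comm]

theorem ft_rpow_beta (κ : ℝ) :
    S.ft κ (S.mu ^ S.beta) = κ * (S.mu ^ S.beta - S.mu * S.a) := by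
  rw [S.hft_eq κ _ (right_mem_Icc.2 S.rpow_beta_pos.le), S.hjt_lin _ S.mu_lt_rpow_beta.le]

theorem ft'_rpow_beta (κ : ℝ) : S.ft' κ (S.mu ^ S.beta) = κ := by
  have hmem : S.mu ^ S.beta ∈ Icc S.mu (S.mu ^ S.beta) := right_mem_Icc.2 S.mu_lt_rpow_beta.le
  have hlin : HasDerivAt (fun r => κ * (r - S.mu * S.a)) κ (S.mu ^ S.beta) := by
    simpa only [mul_one, id_eq] using
      ((hasDerivAt_id (S.mu ^ S.beta)).sub_const (S.mu * S.a)).const_mul κ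
  refine hasDerivAt_unique_of_eqOn (uniqueDiffOn_Icc S.mu_lt_rpow_beta _ hmem) hmem
    (S.hft_deriv κ _) hlin fun r hr => ?_
  rw [S.hft_eq κ r ⟨S.hmu.1.le.trans hr.1, hr.2⟩, S.hjt_lin r hr.1]

/-- The coefficient `q` in the equation `f̃'' = -q f̃` satisfied by `f̃_κ` beyond `μ^β̃`. -/
noncomputable def stiffness : ℝ :=
  1 / 2 * S.a * S.mu ^ (1 - 3 * S.beta)

theorem stiffness_pos : 0 < S.stiffness :=
  mul_pos (mul_pos one_half_pos S.ha) (Real.rpow_pos_of_pos S.hmu.1 _)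

theorem two_mul_stiffness_mul_rpow_beta_pow :
    2 * S.stiffness * (S.mu ^ S.beta) ^ 3 = S.mu * S.a := by
  rw [stiffness]
  linear_combination S.a * S.rpow_one_sub_mul_rpow_beta_pow

theorem energy_ft (κ : ℝ) {r : ℝ} (hr : S.mu ^ S.beta ≤ r) :
    S.ft' κ r ^ 2 + S.stiffness * S.ft κ r ^ 2 =
      κ ^ 2 * (1 + S.stiffness * (S.mu ^ S.beta - S.mu * S.a) ^ 2) := by
  have hV : ∀ y : ℝ, HasDerivAt (fun y => S.stiffness / 2 * y ^ 2) (S.stiffness * y) y := fun y =>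
    ((hasDerivAt_pow 2 y).const_mul (S.stiffness / 2)).congr_deriv (by
      push_cast
      ring)
  have hode : ∀ x > S.mu ^ S.beta, HasDerivAt (S.ft' κ) (-(S.stiffness * S.ft κ x)) x :=
    fun x hx => (S.hft_ode κ x hx).congr_deriv (by rw [stiffness]; ring)
  have henergy := energy_eq_of_hasDerivAt hV (S.hft_deriv κ _).hasDerivWithinAt
    (fun x _ => S.hft_deriv κ x) hode hr
  rw [S.ft_rpow_beta, S.ft'_rpow_beta] at henergy
  linear_combination 2 * henergy

end ScatteringODE

theorem Rbeta_le_general (S : ScatteringODE) {κ R : ℝ}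
    (hκ : |κ| ≤ S.mu ^ S.beta / (S.mu ^ S.beta - S.mu * S.a)) (hR : S.mu ^ S.beta ≤ R)
    (hval : S.ft κ R = R) (hder : S.ft' κ R = 1) :
    R - S.mu ^ S.beta ≤ 2 * S.mu ^ (2 * S.beta) / (S.mu ^ S.beta - S.mu * S.a) ∧
      R ≤ (1 + 2 / (1 - S.a)) * S.mu ^ S.beta := by
  have henergy := S.energy_ft κ hR
  rw [hval, hder, one_pow] at henergy
  have hbound := le_add_of_oscillator_energy_eq S.stiffness_pos S.rpow_beta_pos S.rpow_beta_sub_pos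
    (by rw [S.two_mul_stiffness_mul_rpow_beta_pow]) hκ henergy
  refine ⟨by rw [S.rpow_two_mul_beta]; linarith, hbound.trans ?_⟩
  have ha := sub_pos.2 S.a_lt_one
  have hb := S.rpow_beta_pos
  calc S.mu ^ S.beta + 2 * (S.mu ^ S.beta) ^ 2 / (S.mu ^ S.beta - S.mu * S.a)
      ≤ S.mu ^ S.beta + 2 * (S.mu ^ S.beta) ^ 2 / ((1 - S.a) * S.mu ^ S.beta) := by
        gcongr
        exact S.one_sub_a_mul_rpow_beta_le
    _ = (1 + 2 / (1 - S.a)) * S.mu ^ S.beta := by field_simp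

/-- For `μ` sufficiently small, `R_β - μ^β̃ ≤ C μ^(2β̃)/(μ^β̃ - μa)` with a constant `C` depending
only on `a`; in particular `R_β ≤ C' μ^β̃` with `C'` depending only on `a`. -/
theorem Rbeta_le (a : ℝ) (ha : 0 < a) :
    ∃ C > (0:ℝ), ∃ C' > (0:ℝ), ∃ μ₀ > (0:ℝ),
      ∀ S : TangentScattering, S.a = a → S.mu ≤ μ₀ →
        S.Rb - S.mu ^ S.beta ≤ C * S.mu ^ (2 * S.beta) / (S.mu ^ S.beta - S.mu * S.a) ∧
        S.Rb ≤ C' * S.mu ^ S.beta := by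
  -- The absolute value makes `C'` positive for `a ≥ 1` too, where there is no `S` with `S.a = a`.
  refine ⟨2, two_pos, 1 + 2 / |1 - a|, by positivity, 1, one_pos, ?_⟩
  rintro S rfl -
  rw [abs_of_pos (sub_pos.2 S.a_lt_one)]
  exact Rbeta_le_general S.toScatteringODE
    ((abs_of_pos (one_pos.trans S.hkappa.1)).trans_le S.hkappa.2.le) S.hRb.le S.htan_val S.htan_der
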